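/- Let S be a dense subsemigroup of (ℍ, +) such that S ∩ (B(1) \ {0}) is a subsemigroup of (B(1) \ {0}, ·). Let ⟨xₙ⟩ₙ₌₁^∞ be a sequence in S such that ∑ₙ₌₁^∞ xₙ converges to 0, and let A be an IP* set near 0 in S. Then there exists a sum subsystem ⟨yₙ⟩ₙ₌₁^∞ of ⟨xₙ⟩ₙ₌₁^∞ such that FS(⟨yₙ⟩ₙ₌₁^∞) ∪ FP(⟨yₙ⟩ₙ₌₁^∞) ⊆ A, where FP(⟨yₙ⟩ₙ₌₁^∞) is the set of all products of finitely many distinct terms of the sequence taken in any order without repetition. -/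

import Mathlib

open Filter Topology

/-- Finite sums of distinct terms of a sequence of quaternions. -/
def FS (x : ℕ → Quaternion ℝ) : Set (Quaternion ℝ) :=
  {a | ∃ H : Finset ℕ, H.Nonempty ∧ a = ∑ t ∈ H, x t}

/-- Finite products, in any order without repetition, of terms of a sequence of
quaternions: products `x_{n₁} ⋯ x_{n_k}` with `k ≥ 1` and distinct indices. -/
def FPany (x : ℕ → Quaternion ℝ) : Set (Quaternion ℝ) :=
  {a | ∃ l : List ℕ, l ≠ [] ∧ l.Nodup ∧ a = (l.map x).prod}

/-- The series `∑ₙ xₙ` converges (its partial sums converge). -/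
def SeriesConverges (x : ℕ → Quaternion ℝ) : Prop :=
  ∃ L : Quaternion ℝ, Tendsto (fun N => ∑ n ∈ Finset.range N, x n) atTop (𝓝 L)

/-- `A` is an IP set near 0 in `S`. -/
def IPNearZero (S A : Set (Quaternion ℝ)) : Prop :=
  ∃ z : ℕ → Quaternion ℝ, (∀ n, z n ∈ S) ∧ SeriesConverges z ∧ FS z ⊆ A

/-- `D` is an IP* set near 0 in `S`. -/
def IPStarNearZero (S D : Set (Quaternion ℝ)) : Prop :=
  ∀ C ⊆ S, IPNearZero S C → IPNearZero S (C ∩ D)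

/-- `y` is a sum subsystem of `x`. -/
def SumSubsystem (y x : ℕ → Quaternion ℝ) : Prop :=
  ∃ H : ℕ → Finset ℕ, (∀ n, (H n).Nonempty) ∧
    (∀ n, ∀ i ∈ H n, ∀ j ∈ H (n + 1), i < j) ∧
    (∀ n, y n = ∑ t ∈ H n, x t)

/-!
After passing to a subsequence the series converges absolutely. Sums over finite blocks of indices
are sums over multisets of indices, so the additive semigroup `Multiset ℕ` carries all of them, and
it has an idempotent ultrafilter `U` concentrated on nonempty multisets without repetitions.
Idempotence forces `U` to leave every finite set of indices, since `i ∈ m` and `i ∈ m'` make `i`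
occur twice in `m + m'`. An IP* set near `0` must contain `U`-almost every block sum if almost all
of them lie in `S`: otherwise the Galvin-Glazer construction yields a sum subsystem, summable with
the series itself, all of whose finite sums lie in `S` and avoid the set. Applied to the series
`∑ a * xₙ * b`, this gives `a * t * b ∈ A` for almost every block sum `t`. One then picks the blocks
recursively; a product is controlled by writing it as `a * yₖ * b` with `k` its largest index.
-/

/-- The finite sums of distinct terms of a sequence, `FS` for an arbitrary commutative monoid. -/
def finiteSums {M : Type*} [AddCommMonoid M] (x : ℕ → M) : Set M :=
  {a | ∃ H : Finset ℕ, H.Nonempty ∧ a = ∑ t ∈ H, x t}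

/-- The products, in any order, of distinct terms of a sequence, `FPany` for an arbitrary monoid. -/
def finiteProducts {M : Type*} [Monoid M] (x : ℕ → M) : Set M :=
  {a | ∃ l : List ℕ, l ≠ [] ∧ l.Nodup ∧ a = (l.map x).prod}

/-- Sum subsystems, `SumSubsystem` for an arbitrary commutative monoid. -/
def IsSumSubsystem {M : Type*} [AddCommMonoid M] (y x : ℕ → M) : Prop :=
  ∃ H : ℕ → Finset ℕ, (∀ n, (H n).Nonempty) ∧
    (∀ n, ∀ i ∈ H n, ∀ j ∈ H (n + 1), i < j) ∧
    (∀ n, y n = ∑ t ∈ H n, x t)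

/-- IP* sets near `0`, for an arbitrary topological commutative monoid: the sets meeting all finite
sum sets in `S` of convergent series. Convergence is unconditional and a common point is enough,
which makes this weaker than `IPStarNearZero`. -/
def IsIPStarNearZero {M : Type*} [AddCommMonoid M] [TopologicalSpace M] (S A : Set M) : Prop :=
  ∀ z : ℕ → M, Summable z → finiteSums z ⊆ S → (finiteSums z ∩ A).Nonempty

lemma IPStarNearZero.isIPStarNearZero {S A : Set (Quaternion ℝ)} (hA : IPStarNearZero S A) :
    IsIPStarNearZero S A := by
  intro z hz hzS
  have hz_mem (n : ℕ) : z n ∈ S := hzS ⟨{n}, Finset.singleton_nonempty n, by simp⟩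
  obtain ⟨w, -, -, hw⟩ :=
    hA (FS z) hzS ⟨z, hz_mem, ⟨_, hz.hasSum.tendsto_sum_nat⟩, subset_rfl⟩
  exact ⟨w 0, hw ⟨{0}, Finset.singleton_nonempty 0, by simp⟩⟩

section Sequences

lemma finite_setOf_nodup_list {α : Type*} {t : Set α} (ht : t.Finite) :
    {l : List α | l.Nodup ∧ ∀ a ∈ l, a ∈ t}.Finite := by
  classical
  have := ht.fintype
  refine (Set.finite_range fun l : {l : List t // l.Nodup} => l.1.map (↑)).subset ?_
  rintro l ⟨hl, hlt⟩
  lift l to List t using hlt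
  exact ⟨⟨l, hl.of_map _⟩, rfl⟩

lemma exists_eq_append_cons_forall_lt {α : Type*} [LinearOrder α] {l : List α} (hl : l ≠ [])
    (hnd : l.Nodup) :
    ∃ l₁ k l₂, l = l₁ ++ k :: l₂ ∧ (∀ i ∈ l₁, i < k) ∧ ∀ i ∈ l₂, i < k := by
  obtain ⟨k, hk, hmax⟩ := l.toFinset.exists_max_image id (by simpa using hl)
  obtain ⟨l₁, l₂, rfl⟩ := List.append_of_mem (List.mem_toFinset.1 hk)
  have hk_notMem : k ∉ l₁ ++ l₂ := (List.nodup_cons.1 (List.nodup_middle.1 hnd)).1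
  rw [List.mem_append, not_or] at hk_notMem
  exact ⟨l₁, k, l₂, rfl,
    fun i hi => lt_of_le_of_ne (hmax i (by simp [hi])) (ne_of_mem_of_not_mem hi hk_notMem.1),
    fun i hi => lt_of_le_of_ne (hmax i (by simp [hi])) (ne_of_mem_of_not_mem hi hk_notMem.2)⟩

lemma prod_mul_mul_prod_mem {M : Type*} [Monoid M] {G : Subsemigroup M} {l₁ l₂ : List M} {c : M}
    (h₁ : ∀ a ∈ l₁, a ∈ G) (hc : c ∈ G) (h₂ : ∀ a ∈ l₂, a ∈ G) :
    l₁.prod * c * l₂.prod ∈ G := by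
  have h : (l₁ ++ c :: l₂).prod ∈ G := by
    refine List.prod_induction_nonempty (· ∈ G) (fun _ _ => G.mul_mem) (by simp) fun a ha => ?_
    rcases List.mem_append.1 ha with ha | ha
    · exact h₁ a ha
    · exact (List.mem_cons.1 ha).elim (fun hac => hac ▸ hc) (h₂ a)
  simpa [mul_assoc] using h

lemma tendsto_zero_of_tendsto_sum_range {M : Type*} [AddCommGroup M] [TopologicalSpace M]
    [IsTopologicalAddGroup M] {x : ℕ → M} {a : M}
    (hx : Tendsto (fun N => ∑ n ∈ Finset.range N, x n) atTop (𝓝 a)) : Tendsto x atTop (𝓝 0) := by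
  simpa [Function.comp_def, Finset.sum_range_succ] using
    (hx.comp (tendsto_add_atTop_nat 1)).sub hx

lemma exists_strictMono_summable {E : Type*} [NormedAddCommGroup E] [CompleteSpace E] {x : ℕ → E}
    (hx : MapClusterPt 0 atTop x) : ∃ k : ℕ → ℕ, StrictMono k ∧ Summable (x ∘ k) := by
  have hsmall (n : ℕ) : ∃ᶠ i in atTop, ‖x i‖ < (1 / 2 : ℝ) ^ n := by
    have hball : Metric.ball (0 : E) ((1 / 2) ^ n) ∈ 𝓝 0 :=
      Metric.ball_mem_nhds 0 (by positivity)
    simpa using hx.frequently hball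
  obtain ⟨k, hk, hxk⟩ := extraction_forall_of_frequently hsmall
  exact ⟨k, hk, .of_norm_bounded summable_geometric_two fun n => (hxk n).le⟩

lemma IsSumSubsystem.of_comp {M : Type*} [AddCommMonoid M] {x y : ℕ → M} {k : ℕ → ℕ}
    (hk : StrictMono k) (h : IsSumSubsystem y (x ∘ k)) : IsSumSubsystem y x := by
  obtain ⟨H, hne, hlt, hy⟩ := h
  refine ⟨fun n => (H n).map ⟨k, hk.injective⟩, fun n => (hne n).map, ?_, fun n => by simp [hy]⟩
  simpa using fun n i hi j hj => hk (hlt n i hi j hj)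

end Sequences

section Idempotent

attribute [local instance] Ultrafilter.add Ultrafilter.addSemigroup

lemma finset_sum_mem_of_forall_lt {ι M : Type*} [LinearOrder ι] [AddCommMonoid M] {m : ι → M}
    {D : ι → Set M} (hD : ∀ i j, i < j → m j ∈ D i ∧ ∀ e ∈ D j, m j + e ∈ D i) {F : Finset ι}
    (hF : F.Nonempty) {C : Set M} (hC : ∀ j ∈ F, m j ∈ C ∧ ∀ e ∈ D j, m j + e ∈ C) :
    ∑ j ∈ F, m j ∈ C := by
  induction F using Finset.induction_on_min generalizing C with
  | empty => simp at hF
  | insert i F hi ih =>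
    rw [Finset.sum_insert fun h => (hi i h).false]
    obtain ⟨hmi, hadd⟩ := hC i (Finset.mem_insert_self i F)
    rcases F.eq_empty_or_nonempty with rfl | hF'
    · simpa using hmi
    · exact hadd _ (ih hF' fun j hj => hD i j (hi j hj))

/- Stage `n` chooses `mₙ` together with a set `Dₙ ∈ U` to which all later sums will belong. -/
lemma exists_seq_finset_sum_mem {M : Type*} [AddCommMonoid M] {U : Ultrafilter M} (hU : U + U = U)
    {B : Set M} (hB : B ∈ U) {P : Set M → M → Prop}
    (hP : ∀ t ⊆ B, t.Finite → ∀ᶠ m in U, P t m) :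
    ∃ m : ℕ → M, (∀ n, P (m '' Set.Iio n) (m n)) ∧
      ∀ F : Finset ℕ, F.Nonempty → ∑ n ∈ F, m n ∈ B := by
  have hstage (t : Set (B × {D : Set M // D ∈ U})) (ht : t.Finite) :
      ∃ c : B × {D : Set M // D ∈ U}, P ((fun d => (d.1 : M)) '' t) c.1 ∧
        (∀ e ∈ c.2.1, c.1 + e ∈ B) ∧
        ∀ d ∈ t, (c.1 : M) ∈ d.2.1 ∧ ∀ e ∈ c.2.1, (c.1 : M) + e ∈ d.2.1 := by
    set E : Set M := B ∩ ⋂ d ∈ t, d.2.1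
    have hE : ∀ᶠ m in U, m ∈ E :=
      inter_mem hB ((biInter_mem ht).2 fun d _ => d.2.2)
    have hadd : ∀ᶠ m in U, ∀ᶠ e in U, m + e ∈ E := by
      rwa [← Ultrafilter.eventually_add, hU]
    have hPt : ∀ᶠ m in U, P ((fun d => (d.1 : M)) '' t) m :=
      hP _ (by rintro _ ⟨d, -, rfl⟩; exact d.1.2) (ht.image _)
    obtain ⟨m, hm, hme, hPm⟩ := (hE.and (hadd.and hPt)).exists
    refine ⟨⟨⟨m, hm.1⟩, ⟨{e | m + e ∈ E}, hme⟩⟩, hPm, fun e he => he.1, fun d hd => ?_⟩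
    exact ⟨Set.mem_iInter₂.1 hm.2 d hd, fun e he => Set.mem_iInter₂.1 he.2 d hd⟩
  obtain ⟨c, hc⟩ := Set.seq_of_forall_finite_exists hstage
  refine ⟨fun n => (c n).1, fun n => ?_, fun F hF => ?_⟩
  · simpa only [Set.image_image] using (hc n).1
  · exact finset_sum_mem_of_forall_lt (D := fun n => (c n).2)
      (fun i j hij => (hc j).2.2 _ ⟨i, hij, rfl⟩) hF fun j _ => ⟨(c j).1.2, (hc j).2.1⟩

/-- An idempotent ultrafilter on the free commutative monoid `Multiset ℕ` that lives on the nonempty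
finite subsets of `ℕ`, encoded as multisets without repetitions; addition of disjoint blocks is
their union. -/
structure IsBlockIdempotent (U : Ultrafilter (Multiset ℕ)) : Prop where
  add_self : U + U = U
  eventually_ne_zero : ∀ᶠ (m : Multiset ℕ) in U, m ≠ 0
  eventually_nodup : ∀ᶠ (m : Multiset ℕ) in U, m.Nodup

/-- A sequence of nonempty finite sets of natural numbers, each lying entirely below all later
ones; these are the index sets of sum subsystems. -/
structure IsBlockSequence (H : ℕ → Finset ℕ) : Prop where
  nonempty (n : ℕ) : (H n).Nonempty
  lt_of_mem {i j a b : ℕ} (hij : i < j) (ha : a ∈ H i) (hb : b ∈ H j) : a < b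

/- The bound `n ≤ i` is what makes the induction along the stream work. -/
lemma ne_zero_and_nodup_of_mem_FS {a : Stream' (Multiset ℕ)} {m : Multiset ℕ}
    (hm : m ∈ Hindman.FS a) (n : ℕ) (ha : ∀ k, a.get k = {k + n}) :
    m ≠ 0 ∧ m.Nodup ∧ ∀ i ∈ m, n ≤ i := by
  have htail {a : Stream' (Multiset ℕ)} {n : ℕ} (ha : ∀ k, a.get k = {k + n}) (k : ℕ) :
      a.tail.get k = {k + (n + 1)} := by
    rw [Stream'.get_tail, ha, add_right_comm, add_assoc]
  induction hm generalizing n with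
  | head' a => simp [Stream'.head, ha]
  | tail' a m _ ih =>
    obtain ⟨hm0, hnd, hle⟩ := ih (n + 1) (htail ha)
    exact ⟨hm0, hnd, fun i hi => (Nat.le_succ n).trans (hle i hi)⟩
  | cons' a m _ ih =>
    obtain ⟨-, hnd, hle⟩ := ih (n + 1) (htail ha)
    have hn : n ∉ m := fun h => absurd (hle n h) (by simp)
    have hhead : a.head + m = n ::ₘ m := by simp [Stream'.head, ha]
    rw [hhead]
    refine ⟨Multiset.cons_ne_zero, Multiset.nodup_cons.2 ⟨hn, hnd⟩, fun i hi => ?_⟩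
    rcases Multiset.mem_cons.1 hi with rfl | hi
    · exact le_rfl
    · exact (Nat.le_succ n).trans (hle i hi)

lemma exists_isBlockIdempotent : ∃ U : Ultrafilter (Multiset ℕ), IsBlockIdempotent U := by
  obtain ⟨U, hU, hFS⟩ :=
    Hindman.exists_idempotent_ultrafilter_le_FS (fun n => {n} : Stream' (Multiset ℕ))
  have hmem : ∀ᶠ (m : Multiset ℕ) in U, m ≠ 0 ∧ m.Nodup := by
    filter_upwards [hFS] with m hm
    obtain ⟨hm0, hnd, -⟩ := ne_zero_and_nodup_of_mem_FS hm 0 fun k => rfl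
    exact ⟨hm0, hnd⟩
  exact ⟨U, hU, hmem.mono fun m hm => hm.1, hmem.mono fun m hm => hm.2⟩

namespace IsBlockSequence

variable {H : ℕ → Finset ℕ}

lemma pairwise_disjoint (hH : IsBlockSequence H) : Pairwise (Function.onFun Disjoint H) :=
  (pairwise_disjoint_on H).2 fun _ _ hij =>
    Finset.disjoint_left.2 fun _ ha hb => (hH.lt_of_mem hij ha hb).false

lemma injective (hH : IsBlockSequence H) : Function.Injective H := by
  intro i j hij
  by_contra hne
  have hdisj : Disjoint (H i) (H j) := hH.pairwise_disjoint hne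
  rw [← hij, disjoint_self] at hdisj
  exact (hH.nonempty i).ne_empty hdisj

lemma isSumSubsystem {M : Type*} [AddCommMonoid M] (hH : IsBlockSequence H) (x : ℕ → M) :
    IsSumSubsystem (fun n => ∑ i ∈ H n, x i) x :=
  ⟨H, hH.nonempty, fun n _ ha _ hb => hH.lt_of_mem n.lt_succ_self ha hb, fun _ => rfl⟩

lemma summable_sum {M : Type*} [AddCommGroup M] [UniformSpace M] [IsUniformAddGroup M]
    [CompleteSpace M] (hH : IsBlockSequence H) {x : ℕ → M} (hx : Summable x) :
    Summable fun n => ∑ i ∈ H n, x i := by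
  have hinj : Function.Injective fun p : Σ n, H n => (p.2 : ℕ) := by
    rintro ⟨m, a, ha⟩ ⟨n, b, hb⟩ (rfl : a = b)
    obtain rfl : m = n := by
      by_contra hmn
      exact Finset.disjoint_left.1 (hH.pairwise_disjoint hmn) ha hb
    rfl
  refine (hx.comp_injective hinj).hasSum.sigma (fun n => ?_) |>.summable
  exact (H n).hasSum x

end IsBlockSequence

namespace IsBlockIdempotent

variable {U : Ultrafilter (Multiset ℕ)}

lemma eventually_notMem (hU : IsBlockIdempotent U) (i : ℕ) : ∀ᶠ (m : Multiset ℕ) in U, i ∉ m := by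
  have hadd : ∀ᶠ (m : Multiset ℕ) in U, ∀ᶠ m' in U, (m + m').Nodup := by
    rw [← Ultrafilter.eventually_add, hU.add_self]
    exact hU.eventually_nodup
  rw [Ultrafilter.eventually_not]
  intro hi
  obtain ⟨m, him, hm⟩ := (hi.and hadd).exists
  obtain ⟨m', him', hnd⟩ := (hi.and hm).exists
  exact Multiset.disjoint_left.1 (Multiset.nodup_add.1 hnd).2.2 him him'

lemma eventually_forall_notMem (hU : IsBlockIdempotent U) {s : Set ℕ} (hs : s.Finite) :
    ∀ᶠ (m : Multiset ℕ) in U, ∀ i ∈ s, i ∉ m :=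
  (eventually_all_finite hs).2 fun i _ => hU.eventually_notMem i

lemma eventually_forall_lt (hU : IsBlockIdempotent U) {t : Set (Multiset ℕ)} (ht : t.Finite) :
    ∀ᶠ (m : Multiset ℕ) in U, ∀ k ∈ t, ∀ a ∈ k, ∀ b ∈ m, a < b := by
  refine (eventually_all_finite ht).2 fun k _ => ?_
  refine (eventually_all_finite k.finite_toSet).2 fun a _ => ?_
  filter_upwards [hU.eventually_forall_notMem (Set.finite_Iic a)] with m hm b hb
  exact not_le.1 fun hba => hm b hba hb

lemma exists_isBlockSequence (hU : IsBlockIdempotent U) {B : Set (Multiset ℕ)} (hB : B ∈ U)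
    {P : Set (Multiset ℕ) → Multiset ℕ → Prop}
    (hP : ∀ t ⊆ B, t.Finite → ∀ᶠ (m : Multiset ℕ) in U, P t m) :
    ∃ H : ℕ → Finset ℕ, IsBlockSequence H ∧
      (∀ n, P ((fun i => (H i).val) '' Set.Iio n) (H n).val) ∧
      ∀ F : Finset ℕ, F.Nonempty → ∑ n ∈ F, (H n).val ∈ B := by
  obtain ⟨m, hm, hsum⟩ := exists_seq_finset_sum_mem hU.add_self hB
    (P := fun t m => P t m ∧ m ≠ 0 ∧ m.Nodup ∧ ∀ k ∈ t, ∀ a ∈ k, ∀ b ∈ m, a < b)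
    fun t htB ht => (hP t htB ht).and <| hU.eventually_ne_zero.and <| hU.eventually_nodup.and <|
      hU.eventually_forall_lt ht
  refine ⟨fun n => ⟨m n, (hm n).2.2.1⟩, ⟨fun n => ?_, fun hij ha hb => ?_⟩, fun n => (hm n).1, hsum⟩
  · exact Multiset.exists_mem_of_ne_zero (hm n).2.1
  · exact (hm _).2.2.2 _ ⟨_, hij, rfl⟩ _ ha _ hb

lemma tendsto_sum_map {M : Type*} [AddCommGroup M] [TopologicalSpace M] [IsTopologicalAddGroup M]
    (hU : IsBlockIdempotent U) {x : ℕ → M} (hx : Summable x) :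
    Tendsto (fun m : Multiset ℕ => (m.map x).sum) U (𝓝 0) := by
  intro V hV
  obtain ⟨s, hs⟩ := hx.vanishing hV
  rw [mem_map]
  filter_upwards [hU.eventually_nodup, hU.eventually_forall_notMem s.finite_toSet] with m hnd hm
  exact hs ⟨m, hnd⟩ (Finset.disjoint_right.2 hm)

lemma eventually_sum_map_mem {M : Type*} [AddCommMonoid M] (hU : IsBlockIdempotent U)
    (S : AddSubsemigroup M) {x : ℕ → M} (hx : ∀ n, x n ∈ S) :
    ∀ᶠ (m : Multiset ℕ) in U, (m.map x).sum ∈ S := by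
  filter_upwards [hU.eventually_ne_zero] with m hm
  exact Multiset.sum_induction_nonempty (· ∈ S) (fun _ _ => S.add_mem) (by simpa using hm)
    (by simpa using fun n _ => hx n)

end IsBlockIdempotent

end Idempotent

lemma sum_map_finset_sum_val {ι α M : Type*} [AddCommMonoid M] (H : ι → Finset α) (x : α → M)
    (F : Finset ι) : ((∑ n ∈ F, (H n).val).map x).sum = ∑ n ∈ F, ∑ i ∈ H n, x i :=
  map_sum (Multiset.sumAddMonoidHom.comp (Multiset.mapAddMonoidHom x)) _ F

section IPStar

variable {U : Ultrafilter (Multiset ℕ)}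

lemma IsIPStarNearZero.eventually_sum_map_mem {M : Type*} [AddCommGroup M] [UniformSpace M]
    [IsUniformAddGroup M] [CompleteSpace M] {S A : Set M} (hA : IsIPStarNearZero S A)
    (hU : IsBlockIdempotent U) {x : ℕ → M} (hx : Summable x)
    (hxS : ∀ᶠ (m : Multiset ℕ) in U, (m.map x).sum ∈ S) :
    ∀ᶠ (m : Multiset ℕ) in U, (m.map x).sum ∈ A := by
  by_contra hnot
  have hB : ∀ᶠ (m : Multiset ℕ) in U, (m.map x).sum ∈ S \ A :=
    hxS.and (Ultrafilter.eventually_not.2 hnot)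
  obtain ⟨H, hH, -, hsum⟩ := hU.exists_isBlockSequence hB (P := fun _ _ => True) (by simp)
  have hFS : finiteSums (fun n => ∑ i ∈ H n, x i) ⊆ S \ A := by
    rintro _ ⟨F, hF, rfl⟩
    rw [← sum_map_finset_sum_val]
    exact hsum F hF
  obtain ⟨a, ha, haA⟩ := hA _ (hH.summable_sum hx) (hFS.trans Set.sdiff_subset)
  exact (hFS ha).2 haA

variable {R : Type*} [Ring R] [UniformSpace R] [IsUniformAddGroup R] [IsTopologicalRing R]
  [CompleteSpace R] {G : Subsemigroup R} {A : Set R} {x : ℕ → R}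

lemma IsIPStarNearZero.eventually_prod_mul_mul_prod_mem (hA : IsIPStarNearZero (G : Set R) A)
    (hU : IsBlockIdempotent U) (hx : Summable x)
    (hxG : ∀ᶠ (m : Multiset ℕ) in U, (m.map x).sum ∈ G)
    {l₁ l₂ : List R} (h₁ : ∀ a ∈ l₁, a ∈ G) (h₂ : ∀ a ∈ l₂, a ∈ G) :
    ∀ᶠ (m : Multiset ℕ) in U, l₁.prod * (m.map x).sum * l₂.prod ∈ A := by
  have hmap (m : Multiset ℕ) :
      (m.map fun i => l₁.prod * x i * l₂.prod).sum = l₁.prod * (m.map x).sum * l₂.prod := by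
    rw [Multiset.sum_map_mul_right, Multiset.sum_map_mul_left]
  simp only [← hmap]
  refine hA.eventually_sum_map_mem hU ((hx.mul_left _).mul_right _) ?_
  filter_upwards [hxG] with m hm
  rw [hmap]
  exact prod_mul_mul_prod_mem h₁ hm h₂

lemma finiteProducts_subset_of_forall_lt {M : Type*} [Monoid M] {y : ℕ → M} {A : Set M}
    (h : ∀ n, ∀ l₁ l₂ : List ℕ, l₁.Nodup → l₂.Nodup → (∀ i ∈ l₁, i < n) → (∀ i ∈ l₂, i < n) →
      (l₁.map y).prod * y n * (l₂.map y).prod ∈ A) : finiteProducts y ⊆ A := by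
  rintro _ ⟨l, hl, hnd, rfl⟩
  obtain ⟨l₁, k, l₂, rfl, hlt₁, hlt₂⟩ := exists_eq_append_cons_forall_lt hl hnd
  have hnd₂ : (k :: l₂).Nodup := hnd.of_append_right
  simpa [mul_assoc] using h k l₁ l₂ hnd.of_append_left hnd₂.of_cons hlt₁ hlt₂

theorem IsIPStarNearZero.exists_isSumSubsystem (hA : IsIPStarNearZero (G : Set R) A)
    (hU : IsBlockIdempotent U) (hx : Summable x)
    (hxG : ∀ᶠ (m : Multiset ℕ) in U, (m.map x).sum ∈ G) :
    ∃ y, IsSumSubsystem y x ∧ finiteSums y ∪ finiteProducts y ⊆ A := by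
  let φ : Multiset ℕ → R := fun m => (m.map x).sum
  have hB : ∀ᶠ (m : Multiset ℕ) in U, φ m ∈ A ∩ G := (hA.eventually_sum_map_mem hU hx hxG).and hxG
  let blockLists (t : Set (Multiset ℕ)) := {l : List (Multiset ℕ) | l.Nodup ∧ ∀ m ∈ l, m ∈ t}
  obtain ⟨H, hH, hprod, hsum⟩ := hU.exists_isBlockSequence hB
    (P := fun t m => ∀ l₁ ∈ blockLists t, ∀ l₂ ∈ blockLists t,
      (l₁.map φ).prod * φ m * (l₂.map φ).prod ∈ A) fun t htB ht => by
    have hmem (l) (hl : l ∈ blockLists t) : ∀ a ∈ l.map φ, a ∈ G :=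
      List.forall_mem_map.2 fun m hm => (htB (hl.2 m hm)).2
    have hfin := finite_setOf_nodup_list ht
    exact (eventually_all_finite hfin).2 fun l₁ hl₁ => (eventually_all_finite hfin).2 fun l₂ hl₂ =>
      hA.eventually_prod_mul_mul_prod_mem hU hx hxG (hmem l₁ hl₁) (hmem l₂ hl₂)
  refine ⟨_, hH.isSumSubsystem x, Set.union_subset ?_ (finiteProducts_subset_of_forall_lt ?_)⟩
  · rintro _ ⟨F, hF, rfl⟩
    rw [← sum_map_finset_sum_val]
    exact (hsum F hF).1
  · intro n l₁ l₂ hnd₁ hnd₂ hlt₁ hlt₂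
    have hmem {l : List ℕ} (hnd : l.Nodup) (hlt : ∀ i ∈ l, i < n) :
        l.map (fun i => (H i).val) ∈ blockLists ((fun i => (H i).val) '' Set.Iio n) :=
      ⟨hnd.map (Finset.val_injective.comp hH.injective),
        List.forall_mem_map.2 fun i hi => ⟨i, hlt i hi, rfl⟩⟩
    simpa [φ, Function.comp_def] using hprod n _ (hmem hnd₁ hlt₁) _ (hmem hnd₂ hlt₂)

end IPStar

theorem ipstar_near_zero_sum_subsystem_general {R : Type*} [NormedRing R] [CompleteSpace R]
    (S : AddSubsemigroup R) {V : Set R} (hV : V ∈ 𝓝 0)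
    (hSV : ∀ a ∈ (S : Set R) ∩ (V \ {0}), ∀ b ∈ (S : Set R) ∩ (V \ {0}),
      a * b ∈ (S : Set R) ∩ (V \ {0}))
    {x : ℕ → R} (hxS : ∀ n, x n ∈ S) (hx : MapClusterPt 0 atTop x)
    {A : Set R} (hA : IsIPStarNearZero S A) :
    ∃ y : ℕ → R, IsSumSubsystem y x ∧ finiteSums y ∪ finiteProducts y ⊆ A := by
  obtain ⟨k, hk, hxk⟩ := exists_strictMono_summable hx
  obtain ⟨U, hU⟩ := exists_isBlockIdempotent
  have hS : ∀ᶠ (m : Multiset ℕ) in U, (m.map (x ∘ k)).sum ∈ S :=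
    hU.eventually_sum_map_mem S fun n => hxS (k n)
  obtain ⟨G, hGS, hG⟩ : ∃ G : Subsemigroup R, (G : Set R) ⊆ S ∧
      ∀ᶠ (m : Multiset ℕ) in U, (m.map (x ∘ k)).sum ∈ G := by
    by_cases h0 : ∀ᶠ (m : Multiset ℕ) in U, (m.map (x ∘ k)).sum = 0
    · obtain ⟨m, hm, hm0⟩ := (hS.and h0).exists
      rw [hm0] at hm
      exact ⟨⟨{0}, by simp⟩, Set.singleton_subset_iff.2 hm, h0⟩
    · refine ⟨⟨S ∩ (V \ {0}), fun ha hb => hSV _ ha _ hb⟩, Set.inter_subset_left, ?_⟩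
      have hVk : ∀ᶠ (m : Multiset ℕ) in U, (m.map (x ∘ k)).sum ∈ V := hU.tendsto_sum_map hxk hV
      exact hS.and (hVk.and (Ultrafilter.eventually_not.2 h0))
  have hAG : IsIPStarNearZero (G : Set R) A := fun z hz hzG => hA z hz (hzG.trans hGS)
  obtain ⟨y, hy, hyA⟩ := hAG.exists_isSumSubsystem hU hxk hG
  exact ⟨y, hy.of_comp hk, hyA⟩

/-- Let `S` be a dense subsemigroup of `(ℍ, +)` such that
`S ∩ (B(1) \ {0})` is a subsemigroup of `(B(1) \ {0}, ·)`.  Let `⟨xₙ⟩` be a sequence in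
`S` with `∑ₙ xₙ` converging to `0`, and let `A ⊆ S` be an IP* set near 0.  Then there is
a sum subsystem `⟨yₙ⟩` of `⟨xₙ⟩` with `FS(⟨yₙ⟩) ∪ FP(⟨yₙ⟩) ⊆ A`, where `FP` allows
products of distinct terms in any order. -/
theorem ipstar_near_zero_sum_subsystem (S : Set (Quaternion ℝ))
    (hSdense : Dense S)
    (hSadd : ∀ a ∈ S, ∀ b ∈ S, a + b ∈ S)
    (hSmul : ∀ a ∈ S ∩ (Metric.ball 0 1 \ {0}), ∀ b ∈ S ∩ (Metric.ball 0 1 \ {0}),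
      a * b ∈ S ∩ (Metric.ball 0 1 \ {0}))
    (x : ℕ → Quaternion ℝ) (hxS : ∀ n, x n ∈ S)
    (hx0 : Tendsto (fun N => ∑ n ∈ Finset.range N, x n) atTop (𝓝 0))
    (A : Set (Quaternion ℝ)) (hAS : A ⊆ S) (hA : IPStarNearZero S A) :
    ∃ y : ℕ → Quaternion ℝ, SumSubsystem y x ∧ FS y ∪ FPany y ⊆ A := by
  exact ipstar_near_zero_sum_subsystem_general ⟨S, fun ha hb => hSadd _ ha _ hb⟩
    (Metric.ball_mem_nhds 0 one_pos) hSmul hxS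
    (tendsto_zero_of_tendsto_sum_range hx0).mapClusterPt hA.isIPStarNearZero
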